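/- arXiv:1704.07540 — 3 statements merged into one kernel-verified Lean document; each statement's English description precedes it below -/
import Mathlib

section
/- Let n ≥ 1, μ̃ > 0 and λ̃ ≥ 0 be given. For every real n×n matrix σ one has ⟨𝒜σ, σ⟩ ≥ ‖σ‖² / (2μ̃ + nλ̃) in the Frobenius inner product. In particular, the compliance tensor 𝒜 is positive definite on n×n matrices, with a coercivity constant that is uniform in the Lamé constant λ̃ through the factor 1/(2μ̃ + nλ̃). -/
open Matrix

/-- The compliance tensor of linear elasticity:
`𝒜 σ = (1/(2μ̃)) (σ − (λ̃/(2μ̃ + n λ̃)) tr(σ) I)`. -/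
noncomputable def compliance (n : ℕ) (μ lam : ℝ) (σ : Matrix (Fin n) (Fin n) ℝ) :
    Matrix (Fin n) (Fin n) ℝ :=
  (1 / (2 * μ)) •
    (σ - (lam / (2 * μ + (n : ℝ) * lam)) • σ.trace • (1 : Matrix (Fin n) (Fin n) ℝ))

/-- The Frobenius inner product `⟨A, B⟩ = tr(Aᵀ B)` on square matrices. -/
def frob (n : ℕ) (A B : Matrix (Fin n) (Fin n) ℝ) : ℝ :=
  Matrix.trace (Aᵀ * B)

theorem trace_sq_le_frob (n : ℕ) (σ : Matrix (Fin n) (Fin n) ℝ) :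
    σ.trace ^ 2 ≤ (n : ℝ) * frob n σ σ := by
  have h1 : σ.trace ^ 2 ≤ (n : ℝ) * ∑ i, σ i i ^ 2 := by
    have := sq_sum_le_card_mul_sum_sq (s := (Finset.univ : Finset (Fin n))) (f := fun i => σ i i)
    simpa [Matrix.trace] using this
  have h2 : ∑ i, σ i i ^ 2 ≤ frob n σ σ := by
    simp only [frob, Matrix.trace, Matrix.diag_apply, Matrix.mul_apply, Matrix.transpose_apply]
    refine Finset.sum_le_sum fun i _ => ?_
    rw [pow_two]
    exact Finset.single_le_sum (f := fun j => σ j i * σ j i)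
      (fun j _ => mul_self_nonneg _) (Finset.mem_univ i)
  exact h1.trans (mul_le_mul_of_nonneg_left h2 (Nat.cast_nonneg n))

theorem frob_compliance (n : ℕ) (μ lam : ℝ) (σ : Matrix (Fin n) (Fin n) ℝ) :
    frob n (compliance n μ lam σ) σ = (1 / (2 * μ)) *
      (frob n σ σ - (lam / (2 * μ + (n : ℝ) * lam)) * σ.trace ^ 2) := by
  simp [frob, compliance, Matrix.sub_mul, Matrix.trace_sub, Matrix.trace_smul, pow_two]

/-- For `n ≥ 1`, `μ̃ > 0`, `λ̃ ≥ 0` and every real `n × n` matrix `σ`,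
`⟨𝒜σ, σ⟩ ≥ ‖σ‖² / (2μ̃ + n λ̃)` in the Frobenius inner product. -/
theorem compliance_coercive (n : ℕ) (hn : 1 ≤ n) (μ lam : ℝ) (hμ : 0 < μ) (hlam : 0 ≤ lam)
    (σ : Matrix (Fin n) (Fin n) ℝ) :
    frob n (compliance n μ lam σ) σ ≥ frob n σ σ / (2 * μ + (n : ℝ) * lam) := by
  rw [frob_compliance]
  have ht := mul_le_mul_of_nonneg_left (trace_sq_le_frob n σ) hlam
  have hD : 0 < 2 * μ + (n : ℝ) * lam := by positivity
  have key : (1 / (2 * μ)) *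
      (frob n σ σ - (lam / (2 * μ + (n : ℝ) * lam)) * σ.trace ^ 2)
      - frob n σ σ / (2 * μ + (n : ℝ) * lam)
      = (lam * ((n : ℝ) * frob n σ σ) - lam * σ.trace ^ 2)
        / (2 * μ * (2 * μ + (n : ℝ) * lam)) := by
    field_simp
    ring
  have hpos : 0 ≤ (lam * ((n : ℝ) * frob n σ σ) - lam * σ.trace ^ 2)
        / (2 * μ * (2 * μ + (n : ℝ) * lam)) :=
    div_nonneg (sub_nonneg.mpr ht) (by positivity)
  linarith
end

section
/- For any vectors v = (v₁, v₂) and w = (w₁, w₂) in ℝ² with v ≠ 0, the 2×2 matrix T = (w₁/‖v‖²) [[v₁, v₂], [v₂, −v₁]] + (w₂/‖v‖²) [[−v₂, v₁], [v₁, v₂]] is symmetric, satisfies T v = w (matrix–vector product), and its Frobenius norm satisfies ‖T‖_F ≤ √2 · ‖w‖/‖v‖, where ‖v‖ and ‖w‖ denote the Euclidean norms. In particular, for any v ≠ 0 and any w there exists a symmetric 2×2 matrix T with T v = w and ‖T‖_F ≤ √2 ‖w‖/‖v‖. -/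
open Matrix

/-- Euclidean norm of a vector in `ℝ²`. -/
noncomputable def eNorm2 (v : Fin 2 → ℝ) : ℝ := Real.sqrt (v 0 ^ 2 + v 1 ^ 2)

/-- Frobenius norm of a real `2 × 2` matrix. -/
noncomputable def fNorm2 (T : Matrix (Fin 2) (Fin 2) ℝ) : ℝ :=
  Real.sqrt (∑ i, ∑ j, T i j ^ 2)

/-- Symmetrization tool: for `v ≠ 0` and any `w` in `ℝ²`, the explicit matrix
`T = (w₁/‖v‖²)[[v₁,v₂],[v₂,−v₁]] + (w₂/‖v‖²)[[−v₂,v₁],[v₁,v₂]]` is symmetric,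
maps `v` to `w`, and satisfies `‖T‖_F ≤ √2 ‖w‖/‖v‖`.  In particular such a
symmetric matrix always exists. -/
theorem symmetrization_tool (v w : Fin 2 → ℝ) (hv : v ≠ 0)
    (T : Matrix (Fin 2) (Fin 2) ℝ)
    (hT : T = (w 0 / (v 0 ^ 2 + v 1 ^ 2)) • !![v 0, v 1; v 1, -v 0] +
              (w 1 / (v 0 ^ 2 + v 1 ^ 2)) • !![-v 1, v 0; v 0, v 1]) :
    T.IsSymm ∧ T.mulVec v = w ∧
      fNorm2 T ≤ Real.sqrt 2 * eNorm2 w / eNorm2 v ∧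
      ∃ T' : Matrix (Fin 2) (Fin 2) ℝ, T'.IsSymm ∧ T'.mulVec v = w ∧
        fNorm2 T' ≤ Real.sqrt 2 * eNorm2 w / eNorm2 v := by
  have hpos : 0 < v 0 ^ 2 + v 1 ^ 2 := by
    by_contra hcon
    apply hv
    have h0 : v 0 = 0 := by nlinarith [sq_nonneg (v 0), sq_nonneg (v 1)]
    have h1 : v 1 = 0 := by nlinarith [sq_nonneg (v 0), sq_nonneg (v 1)]
    ext i
    fin_cases i
    · exact h0
    · exact h1
  have hne : v 0 ^ 2 + v 1 ^ 2 ≠ 0 := hpos.ne'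
  have hsymm : T.IsSymm := by
    subst hT
    ext i j
    fin_cases i <;> fin_cases j <;> simp
  have hmul : T.mulVec v = w := by
    subst hT
    ext i
    fin_cases i <;> simp [Matrix.mulVec, dotProduct, Fin.sum_univ_two] <;> field_simp <;> ring
  have hnorm : fNorm2 T ≤ Real.sqrt 2 * eNorm2 w / eNorm2 v := by
    have hsum : ∑ i, ∑ j, T i j ^ 2 =
        2 * (w 0 ^ 2 + w 1 ^ 2) / (v 0 ^ 2 + v 1 ^ 2) := by
      subst hT
      simp [Fin.sum_univ_two]
      field_simp
      ring
    unfold fNorm2 eNorm2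
    rw [hsum, Real.sqrt_div (by positivity), Real.sqrt_mul (by norm_num)]
  exact ⟨hsymm, hmul, hnorm, T, hsymm, hmul, hnorm⟩
end

section
/- Let ρ : ℝ³ → ℝ^{3×3} be differentiable at a point x. Then skw(curl ρ(x)) = −(1/2) Skw₃( (div (Ξρ))(x) ), where curl is applied row-wise, Ξρ is the matrix field y ↦ ρ(y)ᵀ − tr(ρ(y)) I, and div is applied row-wise. Consequently, for every real 3×3 matrix τ̃, the matrix τ̃ + curl ρ(x) is symmetric if and only if (div (Ξρ))(x) = (τ̃₂₃ − τ̃₃₂, τ̃₃₁ − τ̃₁₃, τ̃₁₂ − τ̃₂₁). -/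
open Matrix

/-- For a matrix field `ρ : ℝ³ → ℝ^{3×3}` differentiable at `x`, with `curl ρ(x)`
the row-wise curl, `Ξρ = y ↦ ρ(y)ᵀ − tr(ρ(y)) I`, and `div` the row-wise divergence,
one has `skw(curl ρ(x)) = −(1/2) Skw₃((div Ξρ)(x))`; consequently, for every
`3 × 3` matrix `τ̃`, `τ̃ + curl ρ(x)` is symmetric iff
`(div Ξρ)(x) = (τ̃₂₃ − τ̃₃₂, τ̃₃₁ − τ̃₁₃, τ̃₁₂ − τ̃₂₁)`. -/
theorem skw_curl_three_dim (ρ : (Fin 3 → ℝ) → Fin 3 → Fin 3 → ℝ) (x : Fin 3 → ℝ)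
    (hρ : DifferentiableAt ℝ ρ x)
    (curlρ : Matrix (Fin 3) (Fin 3) ℝ)
    (hcurl : ∀ i,
      curlρ i 0 = fderiv ℝ ρ x (Pi.single 1 1) i 2 - fderiv ℝ ρ x (Pi.single 2 1) i 1 ∧
      curlρ i 1 = fderiv ℝ ρ x (Pi.single 2 1) i 0 - fderiv ℝ ρ x (Pi.single 0 1) i 2 ∧
      curlρ i 2 = fderiv ℝ ρ x (Pi.single 0 1) i 1 - fderiv ℝ ρ x (Pi.single 1 1) i 0)
    (Ξρ : (Fin 3 → ℝ) → Fin 3 → Fin 3 → ℝ)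
    (hΞ : Ξρ = fun y i k => ρ y k i - (∑ j, ρ y j j) * (if i = k then 1 else 0))
    (d : Fin 3 → ℝ)
    (hd : ∀ i, d i = ∑ j, fderiv ℝ Ξρ x (Pi.single j 1) i j) :
    ((1 : ℝ) / 2) • (curlρ - curlρᵀ) =
      (-(1 : ℝ) / 2) • !![0, d 2, -d 1; -d 2, 0, d 0; d 1, -d 0, 0] ∧
    ∀ τ : Matrix (Fin 3) (Fin 3) ℝ, (τ + curlρ).IsSymm ↔
      d = ![τ 1 2 - τ 2 1, τ 2 0 - τ 0 2, τ 0 1 - τ 1 0] := by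
  have hent : ∀ i k, HasFDerivAt (fun y => ρ y i k)
      ((ContinuousLinearMap.proj (R := ℝ) (φ := fun _ : Fin 3 => ℝ) k).comp
        ((ContinuousLinearMap.proj (R := ℝ) (φ := fun _ : Fin 3 => Fin 3 → ℝ) i).comp
          (fderiv ℝ ρ x))) x := fun i k =>
    hasFDerivAt_pi'.1 (hasFDerivAt_pi'.1 hρ.hasFDerivAt i) k
  have hX : DifferentiableAt ℝ Ξρ x := by
    rw [hΞ]
    refine differentiableAt_pi.2 fun i => differentiableAt_pi.2 fun k => ?_
    refine (hent k i).differentiableAt.sub (DifferentiableAt.mul_const ?_ _)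
    exact DifferentiableAt.fun_sum fun j _ => (hent j j).differentiableAt
  have key : ∀ v i k, fderiv ℝ Ξρ x v i k = fderiv ℝ ρ x v k i
      - (∑ j, fderiv ℝ ρ x v j j) * (if i = k then 1 else 0) := by
    intro v i k
    have h1 := hasFDerivAt_pi'.1 (hasFDerivAt_pi'.1 hX.hasFDerivAt i) k
    have h2 := (hent k i).sub ((HasFDerivAt.fun_sum (u := Finset.univ)
      fun j _ => hent j j).mul_const (if i = k then (1 : ℝ) else 0))
    have h3 : (fun y => Ξρ y i k) = fun y => ρ y k i
        - (∑ j, ρ y j j) * (if i = k then 1 else 0) := by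
      rw [hΞ]
    rw [h3] at h1
    have h4 := congrArg (fun L => L v) (h1.unique h2)
    simp only [ContinuousLinearMap.comp_apply, ContinuousLinearMap.proj_apply,
      ContinuousLinearMap.sub_apply, ContinuousLinearMap.smul_apply,
      ContinuousLinearMap.sum_apply, smul_eq_mul] at h4
    rw [h4, mul_comm]
  have d0 := hd 0
  have d1 := hd 1
  have d2 := hd 2
  simp [key, Fin.sum_univ_three] at d0 d1 d2
  obtain ⟨a0, a1, a2⟩ := hcurl 0
  obtain ⟨b0, b1, b2⟩ := hcurl 1
  obtain ⟨c0, c1, c2⟩ := hcurl 2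
  have e0 : curlρ 1 2 - curlρ 2 1 = - d 0 := by rw [b2, c1, d0]; ring
  have e1 : curlρ 2 0 - curlρ 0 2 = - d 1 := by rw [c0, a2, d1]; ring
  have e2 : curlρ 0 1 - curlρ 1 0 = - d 2 := by rw [a1, b0, d2]; ring
  clear d0 d1 d2 a0 a1 a2 b0 b1 b2 c0 c1 c2 hd hcurl key hent
  constructor
  · ext i j
    fin_cases i <;> fin_cases j <;> simp <;> linarith
  · intro τ
    constructor
    · intro h
      have f0 := h.apply 1 2
      have f1 := h.apply 2 0
      have f2 := h.apply 0 1
      simp only [Matrix.add_apply] at f0 f1 f2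
      ext i
      fin_cases i <;> simp <;> linarith
    · intro h
      have f0 := congrFun h 0
      have f1 := congrFun h 1
      have f2 := congrFun h 2
      simp at f0 f1 f2
      refine Matrix.IsSymm.ext fun i j => ?_
      fin_cases i <;> fin_cases j <;> simp <;> linarith
end
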